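/- Define matrices R(x,a,b,c,d) := V(c,b,x)·U(x,d,a) and S(x,a,b,c,d) := U(b,x,a)·V(c,x,d) as 2×2 matrices, and let R₁, S₂ denote their embeddings into GL₃ (block in rows/columns 1,2 for R₁ and 2,3 for S₂). Then the generalized Yang–Baxter relation R₁(b₂,a₂,a₃,a₄,c)·S₂(b₁,a₁,a₂,c,a₆)·R₁(b₃,a₆,c,a₄,a₅) = S₂(b₃',a₁,a₂,a₃,c')·R₁(b₁',c',a₃,a₄,a₅)·S₂(b₂',a₁,c',a₅,a₆) holds whenever the hexahedron system holds: c·b₁·b₁' = a₂a₄a₆ + b₁b₂b₃ + c·a₁a₄; c·b₂·b₂' = a₂a₄a₆ + b₁b₂b₃ + c·a₃a₆; c·b₃·b₃' = a₂a₄a₆ + b₁b₂b₃ + c·a₂a₅; and b₁b₂b₃c²c' = (a₂a₄a₆+b₁b₂b₃)² + (a₂a₄a₆+b₁b₂b₃)(a₁a₄+a₃a₆+a₂a₅)c + (a₁a₂a₄a₅+a₁a₃a₄a₆+a₂a₃a₅a₆)c² + a₁a₃a₅c³. -/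

import Mathlib

open Matrix

noncomputable def Umat {K : Type*} [Field K] (a b c : K) : Matrix (Fin 2) (Fin 2) K :=
  !![1, 0; c * b⁻¹, a * b⁻¹]

noncomputable def Vmat {K : Type*} [Field K] (a b c : K) : Matrix (Fin 2) (Fin 2) K :=
  !![b * c⁻¹, a * c⁻¹; 0, 1]

noncomputable def emb1 {K : Type*} [Field K] (M : Matrix (Fin 2) (Fin 2) K) :
    Matrix (Fin 3) (Fin 3) K :=
  !![M 0 0, M 0 1, 0; M 1 0, M 1 1, 0; 0, 0, 1]

noncomputable def emb2 {K : Type*} [Field K] (M : Matrix (Fin 2) (Fin 2) K) :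
    Matrix (Fin 3) (Fin 3) K :=
  !![1, 0, 0; 0, M 0 0, M 0 1; 0, M 1 0, M 1 1]

noncomputable def R1 {K : Type*} [Field K] (x a b c d : K) : Matrix (Fin 3) (Fin 3) K :=
  emb1 (Vmat c b x * Umat x d a)

noncomputable def S2 {K : Type*} [Field K] (x a b c d : K) : Matrix (Fin 3) (Fin 3) K :=
  emb2 (Umat b x a * Vmat c x d)

theorem stmt11 {K : Type*} [Field K]
    (a₁ a₂ a₃ a₄ a₅ a₆ b₁ b₂ b₃ c b₁' b₂' b₃' c' : K)
    (ha₁ : a₁ ≠ 0) (ha₂ : a₂ ≠ 0) (ha₃ : a₃ ≠ 0) (ha₄ : a₄ ≠ 0) (ha₅ : a₅ ≠ 0) (ha₆ : a₆ ≠ 0)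
    (hb₁ : b₁ ≠ 0) (hb₂ : b₂ ≠ 0) (hb₃ : b₃ ≠ 0) (hc : c ≠ 0)
    (hb₁' : b₁' ≠ 0) (hb₂' : b₂' ≠ 0) (hb₃' : b₃' ≠ 0) (hc' : c' ≠ 0)
    (h1 : c * b₁ * b₁' = a₂ * a₄ * a₆ + b₁ * b₂ * b₃ + c * (a₁ * a₄))
    (h2 : c * b₂ * b₂' = a₂ * a₄ * a₆ + b₁ * b₂ * b₃ + c * (a₃ * a₆))
    (h3 : c * b₃ * b₃' = a₂ * a₄ * a₆ + b₁ * b₂ * b₃ + c * (a₂ * a₅))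
    (h4 : b₁ * b₂ * b₃ * c ^ 2 * c' =
      (a₂ * a₄ * a₆ + b₁ * b₂ * b₃) ^ 2
      + (a₂ * a₄ * a₆ + b₁ * b₂ * b₃) * (a₁ * a₄ + a₃ * a₆ + a₂ * a₅) * c
      + (a₁ * a₂ * a₄ * a₅ + a₁ * a₃ * a₄ * a₆ + a₂ * a₃ * a₅ * a₆) * c ^ 2
      + a₁ * a₃ * a₅ * c ^ 3) :
    R1 b₂ a₂ a₃ a₄ c * S2 b₁ a₁ a₂ c a₆ * R1 b₃ a₆ c a₄ a₅ =
      S2 b₃' a₁ a₂ a₃ c' * R1 b₁' c' a₃ a₄ a₅ * S2 b₂' a₁ c' a₅ a₆ := by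
  have e1 : b₁' = (a₂ * a₄ * a₆ + b₁ * b₂ * b₃ + c * (a₁ * a₄)) / (c * b₁) := by
    rw [eq_div_iff (by simp [*])]; linear_combination h1
  have e2 : b₂' = (a₂ * a₄ * a₆ + b₁ * b₂ * b₃ + c * (a₃ * a₆)) / (c * b₂) := by
    rw [eq_div_iff (by simp [*])]; linear_combination h2
  have e3 : b₃' = (a₂ * a₄ * a₆ + b₁ * b₂ * b₃ + c * (a₂ * a₅)) / (c * b₃) := by
    rw [eq_div_iff (by simp [*])]; linear_combination h3
  have e4 : c' = ((a₂ * a₄ * a₆ + b₁ * b₂ * b₃) ^ 2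
      + (a₂ * a₄ * a₆ + b₁ * b₂ * b₃) * (a₁ * a₄ + a₃ * a₆ + a₂ * a₅) * c
      + (a₁ * a₂ * a₄ * a₅ + a₁ * a₃ * a₄ * a₆ + a₂ * a₃ * a₅ * a₆) * c ^ 2
      + a₁ * a₃ * a₅ * c ^ 3) / (b₁ * b₂ * b₃ * c ^ 2) := by
    rw [eq_div_iff (by simp [*])]; linear_combination h4
  ext i j
  fin_cases i <;> fin_cases j <;>
    simp [R1, S2, emb1, emb2, Umat, Vmat, Matrix.mul_apply, Fin.sum_univ_succ] <;> field_simp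
  all_goals (clear h1 h2 h3 h4; simp only [e1, e2, e3, e4])
  all_goals field_simp
  all_goals ring
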